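/- arXiv:2012.15464 — 2 statements merged into one kernel-verified Lean document; each statement's English description precedes it below -/
import Mathlib

section
/- Let A be an n×n pseudo principal matrix. If Δ_{{1,…,r}} = 0 for some r with 1 ≤ r ≤ n, then Δ_{{1,…,t}} = 0 for every t with r ≤ t ≤ n. -/
/-!
A principal minor of a pseudo principal matrix `A` vanishes exactly when its index set `I` contains
a nonempty set `J` that is *closed*, meaning `A i j = 0` for all `i ∈ J` and `j ∉ J`. The right-hand
condition is monotone in `I`, which gives the theorem.

To find `J` from a singular principal submatrix, a maximum principle is used
(`exists_closed_of_pminor_eq_zero`): let `v` be a kernel vector on `I` with some positive entry, `a`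
the positive kernel vector of `A`, and `J` the set of indices where `v i / a i` attains its maximum
`M > 0`. For `i ∈ J`, row `i` applied to `M a - v` (with `v` extended by zero) is a vanishing sum of
nonnegative terms, since the possibly negative coefficient `A i i` meets the entry `0`. Hence
`A i j = 0` wherever `M a j - v j > 0`, that is, for `j ∉ J`.

Conversely (`pminor_eq_zero_of_closed`), on a closed set the restriction of `a` is a kernel vector,
so the submatrix on `J` is singular. It then has a left kernel vector, whose extension by zero
is a left kernel vector of the submatrix on any larger index set.
-/

/-- An `n × n` integer matrix is *pseudo principal* if its diagonal entries are negative,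
its off-diagonal entries are nonnegative, and it kills some vector of positive integers. -/
def Matrix.IsPseudoPrincipal {n : ℕ} (A : Matrix (Fin n) (Fin n) ℤ) : Prop :=
  (∀ i, A i i < 0) ∧ (∀ i j, i ≠ j → 0 ≤ A i j) ∧
    ∃ a : Fin n → ℤ, (∀ i, 0 < a i) ∧ A.mulVec a = 0

/-- `Δ_I`: the principal minor of `A` on the rows and columns in `I`. -/
def pminor {n : ℕ} (A : Matrix (Fin n) (Fin n) ℤ) (I : Finset (Fin n)) : ℤ :=
  (A.submatrix (fun i : {x : Fin n // x ∈ I} => (i : Fin n))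
    (fun j : {x : Fin n // x ∈ I} => (j : Fin n))).det

/-- A principal minor vanishes iff its submatrix has a nonzero kernel vector, encoded as a vector on
the full index set that is zero off `I`. -/
theorem pminor_eq_zero_iff_right {n : ℕ} (A : Matrix (Fin n) (Fin n) ℤ) (I : Finset (Fin n)) :
    pminor A I = 0 ↔ ∃ v : Fin n → ℤ, (∃ i ∈ I, v i ≠ 0) ∧ (∀ i, i ∉ I → v i = 0) ∧
      ∀ i ∈ I, ∑ j, A i j * v j = 0 := by
  unfold pminor
  rw [← Matrix.exists_mulVec_eq_zero_iff]
  constructor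
  · rintro ⟨w, hw0, hw⟩
    obtain ⟨i, hi⟩ := Function.ne_iff.mp hw0
    refine ⟨fun i => if h : i ∈ I then w ⟨i, h⟩ else 0, ⟨i, i.2, by simpa using hi⟩,
      fun i hi => by simp [hi], fun i hi => ?_⟩
    have h := congrFun hw ⟨i, hi⟩
    simp only [Matrix.mulVec, dotProduct, Matrix.submatrix_apply, Pi.zero_apply] at h
    refine Eq.trans ?_ h
    rw [← Finset.sum_subset (Finset.subset_univ I) (fun j _ hj => by simp [hj]),
      ← Finset.sum_coe_sort I]
    exact Finset.sum_congr rfl fun j _ => by simp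
  · rintro ⟨v, ⟨i, hi, hvi⟩, hv0, hv⟩
    refine ⟨fun i => v i, fun h => hvi (congrFun h ⟨i, hi⟩), funext fun k => ?_⟩
    have h := hv k k.2
    rw [← Finset.sum_subset (Finset.subset_univ I) (fun j _ hj => by simp [hv0 j hj]),
      ← Finset.sum_coe_sort I] at h
    exact h

theorem pminor_transpose {n : ℕ} (A : Matrix (Fin n) (Fin n) ℤ) (I : Finset (Fin n)) :
    pminor A.transpose I = pminor A I := by
  unfold pminor
  rw [← Matrix.transpose_submatrix, Matrix.det_transpose]

/-- The maximum principle: the indices maximizing `v i / a i`, for a kernel vector `v` of the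
submatrix on `I`, form a closed set. -/
theorem exists_closed_of_pminor_eq_zero {n : ℕ} {A : Matrix (Fin n) (Fin n) ℤ}
    (hA : A.IsPseudoPrincipal) {I : Finset (Fin n)} (hI : pminor A I = 0) :
    ∃ J ⊆ I, J.Nonempty ∧ ∀ i ∈ J, ∀ j, j ∉ J → A i j = 0 := by
  obtain ⟨-, hoff, a, ha, hAa⟩ := hA
  obtain ⟨v, ⟨p, hpI, hp⟩, hv0, hv⟩ : ∃ v : Fin n → ℤ, (∃ i ∈ I, 0 < v i) ∧
      (∀ i, i ∉ I → v i = 0) ∧ ∀ i ∈ I, ∑ j, A i j * v j = 0 := by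
    obtain ⟨v, ⟨p, hpI, hp⟩, hv0, hv⟩ := (pminor_eq_zero_iff_right A I).1 hI
    rcases lt_or_gt_of_ne hp with h | h
    · exact ⟨-v, ⟨p, hpI, by simpa using h⟩, fun i hi => by simp [hv0 i hi],
        fun i hi => by simpa using hv i hi⟩
    · exact ⟨v, ⟨p, hpI, h⟩, hv0, hv⟩
  obtain ⟨m, -, hm⟩ := Finset.exists_max_image Finset.univ (fun i => (v i : ℚ) / a i) ⟨p, by simp⟩
  -- The inequality `v j / a j ≤ v m / a m` with denominators cleared.
  have hmax : ∀ j, v j * a m ≤ v m * a j := fun j => by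
    have h := hm j (Finset.mem_univ j)
    rw [div_le_div_iff₀ (by exact_mod_cast ha j) (by exact_mod_cast ha m)] at h
    exact_mod_cast h
  have hvm : 0 < v m := by
    have h1 := hmax p
    have h2 := mul_pos hp (ha m)
    exact pos_of_mul_pos_left (h2.trans_le h1) (ha p).le
  have hsub : ∀ i, v i * a m = v m * a i → i ∈ I := fun i hi => by
    by_contra h
    rw [hv0 i h, zero_mul] at hi
    exact (mul_pos hvm (ha i)).ne hi
  refine ⟨Finset.univ.filter fun i => v i * a m = v m * a i, fun i hi => hsub i (by simpa using hi),
    ⟨m, by simp⟩, fun i hi j hj => ?_⟩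
  simp only [Finset.mem_filter, Finset.mem_univ, true_and] at hi hj
  have hsum : ∑ j, A i j * (v m * a j - v j * a m) = 0 := by
    have h1 : ∑ j, A i j * a j = 0 := congrFun hAa i
    have h2 := hv i (hsub i hi)
    calc ∑ j, A i j * (v m * a j - v j * a m)
        = v m * ∑ j, A i j * a j - a m * ∑ j, A i j * v j := by
          rw [Finset.mul_sum, Finset.mul_sum, ← Finset.sum_sub_distrib]
          exact Finset.sum_congr rfl fun j _ => by ring
      _ = 0 := by rw [h1, h2]; ring
  have hnonneg : ∀ k ∈ Finset.univ, 0 ≤ A i k * (v m * a k - v k * a m) := fun k _ => by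
    by_cases hk : i = k
    · subst hk; rw [hi]; simp
    · exact mul_nonneg (hoff i k hk) (sub_nonneg.2 (hmax k))
  have h := (Finset.sum_eq_zero_iff_of_nonneg hnonneg).1 hsum j (Finset.mem_univ j)
  exact (mul_eq_zero.1 h).resolve_right fun h => hj (by linarith)

theorem pminor_eq_zero_of_closed {n : ℕ} {A : Matrix (Fin n) (Fin n) ℤ}
    (hA : A.IsPseudoPrincipal) {J K : Finset (Fin n)} (hJ : J.Nonempty)
    (hclosed : ∀ i ∈ J, ∀ j, j ∉ J → A i j = 0) (hJK : J ⊆ K) : pminor A K = 0 := by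
  obtain ⟨-, -, a, ha, hAa⟩ := hA
  have hdet : pminor A J = 0 := by
    obtain ⟨p, hp⟩ := hJ
    refine (pminor_eq_zero_iff_right A J).2 ⟨fun i => if i ∈ J then a i else 0,
      ⟨p, hp, by simp [hp, (ha p).ne']⟩, fun i hi => by simp [hi], fun i hi => ?_⟩
    have h1 : ∑ j, A i j * a j = 0 := congrFun hAa i
    rw [← h1]
    refine Finset.sum_congr rfl fun j _ => ?_
    by_cases hj : j ∈ J
    · simp [hj]
    · simp [hj, hclosed i hi j hj]
  rw [← pminor_transpose, pminor_eq_zero_iff_right] at hdet ⊢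
  obtain ⟨u, ⟨p, hp, hup⟩, hu0, hu⟩ := hdet
  refine ⟨u, ⟨p, hJK hp, hup⟩, fun i hi => hu0 i fun h => hi (hJK h), fun j _ => ?_⟩
  by_cases hj : j ∈ J
  · exact hu j hj
  · refine Finset.sum_eq_zero fun i _ => ?_
    by_cases hi : i ∈ J
    · simp [hclosed i hi j hj]
    · simp [hu0 i hi]

/-- if the leading principal minor `Δ_{{1,…,r}}` of a pseudo principal matrix
vanishes, then the leading principal minor `Δ_{{1,…,t}}` vanishes for all `r ≤ t ≤ n`. -/
theorem leading_pminor_eq_zero_of_isPseudoPrincipal {n : ℕ} (A : Matrix (Fin n) (Fin n) ℤ)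
    (hA : A.IsPseudoPrincipal) (r : ℕ) (hr1 : 1 ≤ r) (hrn : r ≤ n)
    (hr : pminor A (Finset.univ.filter fun i : Fin n => (i : ℕ) < r) = 0) :
    ∀ t : ℕ, r ≤ t → t ≤ n →
      pminor A (Finset.univ.filter fun i : Fin n => (i : ℕ) < t) = 0 := by
  intro t hrt _
  obtain ⟨J, hJ, hne, hclosed⟩ := exists_closed_of_pminor_eq_zero hA hr
  refine pminor_eq_zero_of_closed hA hne hclosed (hJ.trans fun i hi => ?_)
  simp only [Finset.mem_filter, Finset.mem_univ, true_and] at hi ⊢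
  omega
end

section
/- Let A be an n×n pseudo principal matrix and let r be an integer with 1 ≤ r ≤ n. Suppose Δ_{{1,…,r−1}} ≠ 0 and Δ_{{1,…,r}} = 0. Then A_{rq} = 0 for every q with r+1 ≤ q ≤ n, and moreover A_{ri}·A_{iq} = 0 for every i < r and every q with r+1 ≤ q ≤ n. -/
/-- A principal minor vanishes iff the submatrix has a nonzero left kernel vector. The vector is
indexed by all of `Fin n`, and only its values on `I` matter. -/
theorem pminor_eq_zero_iff {n : ℕ} (A : Matrix (Fin n) (Fin n) ℤ) (I : Finset (Fin n)) :
    pminor A I = 0 ↔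
      ∃ u : Fin n → ℤ, (∃ i ∈ I, u i ≠ 0) ∧ ∀ j ∈ I, ∑ i ∈ I, u i * A i j = 0 := by
  unfold pminor
  rw [← Matrix.exists_vecMul_eq_zero_iff]
  constructor
  · rintro ⟨v, hv, h⟩
    obtain ⟨i, hi⟩ := Function.ne_iff.mp hv
    refine ⟨fun i => if h : i ∈ I then v ⟨i, h⟩ else 0, ⟨i, i.2, by simpa using hi⟩, ?_⟩
    intro j hj
    have := congrFun h ⟨j, hj⟩
    rw [← Finset.sum_coe_sort]
    simpa [Matrix.vecMul, dotProduct] using this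
  · rintro ⟨u, ⟨i, hi, hu⟩, h⟩
    refine ⟨fun i => u i, Function.ne_iff.mpr ⟨⟨i, hi⟩, hu⟩, ?_⟩
    funext j
    have := h j j.2
    rw [← Finset.sum_coe_sort] at this
    simpa [Matrix.vecMul, dotProduct] using this

/-- The absolute values of a left kernel vector of a principal submatrix of `A` on `I`, extended by
zero, form a left kernel vector of the whole matrix. -/
theorem abs_colSum_eq_zero {n : ℕ} {A : Matrix (Fin n) (Fin n) ℤ} (hA : A.IsPseudoPrincipal)
    {I : Finset (Fin n)} {u : Fin n → ℤ} (hu : ∀ j ∈ I, ∑ i ∈ I, u i * A i j = 0) (j : Fin n) :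
    ∑ i ∈ I, |u i| * A i j = 0 := by
  obtain ⟨hdiag, hoff, a, ha, hAa⟩ := hA
  have hnonneg : ∀ j, 0 ≤ ∑ i ∈ I, |u i| * A i j := by
    intro j
    by_cases hj : j ∈ I
    · have h := hu j hj
      rw [← Finset.add_sum_erase _ _ hj] at h ⊢
      have h1 : |u j * A j j| ≤ ∑ i ∈ I.erase j, |u i| * A i j := by
        rw [eq_neg_of_add_eq_zero_left h, abs_neg]
        refine (Finset.abs_sum_le_sum_abs _ _).trans (le_of_eq (Finset.sum_congr rfl ?_))
        intro i hi
        rw [abs_mul, abs_of_nonneg (hoff i j (Finset.ne_of_mem_erase hi))]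
      rw [abs_mul, abs_of_neg (hdiag j)] at h1
      linarith
    · exact Finset.sum_nonneg fun i hi =>
        mul_nonneg (abs_nonneg _) (hoff i j fun h => hj (h ▸ hi))
  have htotal : ∑ j, (∑ i ∈ I, |u i| * A i j) * a j = 0 := by
    simp_rw [Finset.sum_mul]
    rw [Finset.sum_comm]
    refine Finset.sum_eq_zero fun i _ => ?_
    have h : ∑ j, A i j * a j = 0 := congrFun hAa i
    simp_rw [mul_assoc]
    rw [← Finset.mul_sum, h, mul_zero]
  have hj := (Finset.sum_eq_zero_iff_of_nonneg fun j _ =>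
    mul_nonneg (hnonneg j) (ha j).le).mp htotal j (Finset.mem_univ j)
  exact (mul_eq_zero.mp hj).resolve_right (ne_of_gt (ha j))

/-- if `Δ_{{1,…,r-1}} ≠ 0` and `Δ_{{1,…,r}} = 0` for a pseudo principal
matrix `A`, then (using 1-based row/column labels) `A_{rq} = 0` for all `q ≥ r + 1`, and
`A_{ri}·A_{iq} = 0` for all `i < r` and all `q ≥ r + 1`. -/
theorem row_zero_of_pminor_zero {n : ℕ} (A : Matrix (Fin n) (Fin n) ℤ)
    (hA : A.IsPseudoPrincipal) (r : ℕ) (hr1 : 1 ≤ r) (hrn : r ≤ n)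
    (hne : pminor A (Finset.univ.filter fun i : Fin n => (i : ℕ) < r - 1) ≠ 0)
    (hzero : pminor A (Finset.univ.filter fun i : Fin n => (i : ℕ) < r) = 0) :
    (∀ i q : Fin n, (i : ℕ) + 1 = r → r ≤ (q : ℕ) → A i q = 0) ∧
    (∀ i j q : Fin n, (i : ℕ) + 1 = r → (j : ℕ) + 1 < r → r ≤ (q : ℕ) →
      A i j * A j q = 0) := by
  obtain ⟨u, ⟨k, hk, huk⟩, hu⟩ := (pminor_eq_zero_iff A _).mp hzero
  have hd := abs_colSum_eq_zero hA hu
  have hoff := hA.2.1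
  have hlast : ∀ i : Fin n, (i : ℕ) + 1 = r → u i ≠ 0 := by
    intro i hi hui
    have hI : (Finset.univ.filter fun x : Fin n => (x : ℕ) < r) =
        insert i (Finset.univ.filter fun x : Fin n => (x : ℕ) < r - 1) := by
      ext x
      simp only [Finset.mem_filter, Finset.mem_univ, true_and, Finset.mem_insert, Fin.ext_iff]
      omega
    have hi' : i ∉ Finset.univ.filter fun x : Fin n => (x : ℕ) < r - 1 := by
      simp only [Finset.mem_filter, Finset.mem_univ, true_and]
      omega
    rw [hI] at hk hu
    refine hne ((pminor_eq_zero_iff A _).mpr ⟨u, ⟨k, ?_, huk⟩, fun j hj => ?_⟩)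
    · exact (Finset.mem_insert.mp hk).resolve_left fun h => huk (h ▸ hui)
    · simpa [Finset.sum_insert hi', hui] using hu j (Finset.mem_insert_of_mem hj)
  have hcol : ∀ i q : Fin n, (i : ℕ) < r → r ≤ (q : ℕ) → u i ≠ 0 → A i q = 0 := by
    intro i q hi hq hui
    have h := (Finset.sum_eq_zero_iff_of_nonneg fun x hx => mul_nonneg (abs_nonneg (u x))
      (hoff x q fun h => by
        have := (Finset.mem_filter.mp hx).2
        rw [h] at this
        omega)).mp (hd q) i (by simpa using hi)
    exact (mul_eq_zero.mp h).resolve_left (abs_ne_zero.mpr hui)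
  refine ⟨fun i q hi hq => hcol i q (by omega) hq (hlast i hi), fun i j q hi hj hq => ?_⟩
  by_cases huj : u j = 0
  · -- The diagonal term of the `j`-th column sum vanishes, so all its terms are nonnegative.
    have h := (Finset.sum_eq_zero_iff_of_nonneg fun x _ => by
      by_cases hx : x = j
      · simp [hx, huj]
      · exact mul_nonneg (abs_nonneg (u x)) (hoff x j hx)).mp (hd j) i
        (by simp only [Finset.mem_filter, Finset.mem_univ, true_and]; omega)
    rw [(mul_eq_zero.mp h).resolve_left (abs_ne_zero.mpr (hlast i hi)), zero_mul]
  · rw [hcol j q (by omega) hq huj, mul_zero]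
end
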